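/- Let d ≥ 2 and let A be the d × d real matrix with A_{i,j} = sign(j − i) (i.e. 1 if i < j, −1 if i > j, 0 if i = j). Then the vectors A(e_i + e_{d+1−i}) for i = 1, …, ⌊d/2⌋ are linearly independent. Moreover rank A = 2⌊d/2⌋. -/

import Mathlib

/-!
Let `U` be the `d × ⌊d/2⌋` matrix with columns `e_i + e_{d+1-i}` and `W` the `⌊d/2⌋ × d` matrix with
rows `e_iᵀ`. Reversing the order of the indices negates `A`, hence `Uᵀ A U = 0`, while `W A U` is
upper unitriangular. The latter gives the independence of the columns of `A U`. Together with the
skew symmetry of `A`, the two facts make `(Wᵀ | U)ᵀ A (U | Wᵀ)` block triangular with invertible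
diagonal blocks, so `2⌊d/2⌋ ≤ rank A`. For odd `d` the rank is not `d`, since `A` kills
`(1, -1, …, -1, 1)`.
-/

open Matrix

section Rank

variable {R m n : Type*} [Fintype n]

lemma linearIndependent_col_of_isUnit_mul [CommSemiring R] [Fintype m] [DecidableEq m]
    {B : Matrix m n R} {C : Matrix n m R} (h : IsUnit (B * C)) : LinearIndependent R C.col := by
  rw [← mulVec_injective_iff]
  refine .of_comp (f := B.mulVec) ?_
  simpa only [Function.comp_def, mulVec_mulVec] using mulVec_injective_of_isUnit h

variable [CommRing R] [Nontrivial R]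

lemma rank_lt_card_of_mulVec_eq_zero {A : Matrix m n R} {x : n → R}
    (hx : x ≠ 0) (hAx : A *ᵥ x = 0) : A.rank < Fintype.card n := by
  refine A.rank_le_card_width.lt_of_ne fun hrank => hx ?_
  have hcol : LinearIndependent R A.col := by
    rw [linearIndependent_iff_card_eq_finrank_span, ← hrank, rank_eq_finrank_span_cols]
    rfl
  exact mulVec_injective_iff.mpr hcol (hAx.trans (mulVec_zero A).symm)

lemma two_mul_card_le_rank_of_isotropic [Fintype m] [DecidableEq m]
    {A : Matrix n n R} {U : Matrix n m R} {W : Matrix m n R} (hA : Aᵀ = -A)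
    (hU : Uᵀ * A * U = 0) (hW : IsUnit (W * (A * U))) : 2 * Fintype.card m ≤ A.rank := by
  have hUW : Uᵀ * A * Wᵀ = -(W * (A * U))ᵀ := by
    simp only [transpose_mul, hA, Matrix.mul_neg, Matrix.neg_mul, neg_neg]
  have hblocks : fromRows W Uᵀ * A * fromCols U Wᵀ =
      fromBlocks (W * (A * U)) (W * A * Wᵀ) 0 (-(W * (A * U))ᵀ) := by
    rw [fromRows_mul, fromRows_mul_fromCols, hU, hUW, Matrix.mul_assoc W]
  have hunit : IsUnit (fromRows W Uᵀ * A * fromCols U Wᵀ) := by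
    rw [hblocks, isUnit_fromBlocks_zero₂₁, IsUnit.neg_iff, isUnit_transpose]
    exact ⟨hW, hW⟩
  calc 2 * Fintype.card m = (fromRows W Uᵀ * A * fromCols U Wᵀ).rank := by
        rw [rank_of_isUnit _ hunit, Fintype.card_sum, two_mul]
    _ ≤ (fromRows W Uᵀ * A).rank := rank_mul_le_left _ _
    _ ≤ A.rank := rank_mul_le_right _ _

end Rank

section Selection

variable {R l m n : Type*} [NonAssocSemiring R] [Fintype n] [DecidableEq n]

lemma mul_one_submatrix_id_left (A : Matrix m n R) (e : l → n) :
    A * (1 : Matrix n n R).submatrix id e = A.submatrix id e := by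
  ext i j
  simp [mul_apply, one_apply]

lemma one_submatrix_id_right_mul (A : Matrix n m R) (e : l → n) :
    (1 : Matrix n n R).submatrix e id * A = A.submatrix e id := by
  ext i j
  simp [mul_apply, one_apply]

end Selection

section SignMatrix

variable (R : Type*) [Ring R]

/-- The matrix of the signs of `j - i`, which is the intersection matrix `Ω_π` of the
order-reversing permutation `π` of `d` letters. -/
def signMatrix (d : ℕ) : Matrix (Fin d) (Fin d) R :=
  of fun i j => if i < j then 1 else if j < i then -1 else 0

/-- The smaller letter of the `i`-th cycle of length two of the order-reversing permutation of `d`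
letters; the larger one is its image under `Fin.rev`. -/
def cycleRep (d : ℕ) : Fin (d / 2) → Fin d :=
  Fin.castLE (Nat.div_le_self d 2)

/-- The matrix whose columns are the indicator vectors `e_i + e_{d+1-i}`, `i = 1, …, ⌊d/2⌋`, of the
transposition cycles of the order-reversing permutation. -/
def transpositionMatrix (d : ℕ) : Matrix (Fin d) (Fin (d / 2)) R :=
  (1 : Matrix (Fin d) (Fin d) R).submatrix id (cycleRep d) +
    (1 : Matrix (Fin d) (Fin d) R).submatrix id (Fin.rev ∘ cycleRep d)

lemma cycleRep_lt_cycleRep {d : ℕ} {i j : Fin (d / 2)} : cycleRep d i < cycleRep d j ↔ i < j :=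
  Iff.rfl

lemma cycleRep_lt_rev_cycleRep {d : ℕ} (i j : Fin (d / 2)) :
    cycleRep d i < (cycleRep d j).rev := by
  simp only [cycleRep, Fin.lt_def, Fin.val_rev, Fin.val_castLE]
  omega

variable {R}

lemma transpositionMatrix_col {d : ℕ} (i : Fin (d / 2)) :
    (transpositionMatrix R d).col i =
      Pi.single (cycleRep d i) 1 + Pi.single (cycleRep d i).rev 1 := by
  ext k
  simp [transpositionMatrix, one_apply, Pi.single_apply]

lemma mul_transpositionMatrix {m : Type*} {d : ℕ} (A : Matrix m (Fin d) R) :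
    A * transpositionMatrix R d =
      A.submatrix id (cycleRep d) + A.submatrix id (Fin.rev ∘ cycleRep d) := by
  rw [transpositionMatrix, Matrix.mul_add, mul_one_submatrix_id_left, mul_one_submatrix_id_left]

lemma transpose_signMatrix (d : ℕ) : (signMatrix R d)ᵀ = -signMatrix R d := by
  ext i j
  rcases lt_trichotomy i j with hij | rfl | hji
  · simp [signMatrix, hij, hij.not_gt]
  · simp [signMatrix]
  · simp [signMatrix, hji, hji.not_gt]

lemma signMatrix_rev_rev {d : ℕ} (i j : Fin d) :
    signMatrix R d i.rev j.rev = -signMatrix R d i j := by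
  simpa [signMatrix] using congr_fun₂ (transpose_signMatrix (R := R) d) i j

lemma signMatrix_rev_left {d : ℕ} (i j : Fin d) :
    signMatrix R d i.rev j = -signMatrix R d i j.rev := by
  rw [← signMatrix_rev_rev, Fin.rev_rev]

lemma transpositionMatrix_isotropic (d : ℕ) :
    (transpositionMatrix R d)ᵀ * signMatrix R d * transpositionMatrix R d = 0 := by
  rw [mul_transpositionMatrix]
  ext i j
  simp [transpositionMatrix, Matrix.add_mul, one_submatrix_id_right_mul, signMatrix_rev_left]

lemma signMatrix_mulVec_apply {d : ℕ} (x : ℕ → R) (i : Fin d) :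
    (signMatrix R d *ᵥ fun j => x j) i =
      ∑ j ∈ Finset.range d, x j - ∑ j ∈ Finset.range (i + 1), x j - ∑ j ∈ Finset.range i, x j := by
  have hfilter {k : ℕ} (hk : k ≤ d) :
      ∑ j ∈ Finset.range k, x j = ∑ j : Fin d, if j.val < k then x j else 0 := by
    have hrange : Finset.range k = {j ∈ Finset.range d | j < k} := by grind
    rw [Fin.sum_univ_eq_sum_range (fun j => if j < k then x j else 0), hrange, Finset.sum_filter]
  -- Entrywise, `sign (j - i) = 1 - [j < i + 1] - [j < i]`.
  rw [hfilter le_rfl, hfilter i.isLt, hfilter i.isLt.le, ← Finset.sum_sub_distrib,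
    ← Finset.sum_sub_distrib, mulVec, dotProduct]
  refine Finset.sum_congr rfl fun j _ => ?_
  rcases lt_trichotomy i j with hij | rfl | hji
  · simp [signMatrix, hij, hij.not_gt, hij.not_ge]
  · simp [signMatrix]
  · simp [signMatrix, hji, hji.not_gt, hji.le]

lemma signMatrix_mulVec_alternating {d : ℕ} (hd : Odd d) :
    (signMatrix R d *ᵥ fun j => (-1) ^ j.val) = 0 := by
  ext i
  rw [signMatrix_mulVec_apply fun j => (-1) ^ j, geom_sum_succ, neg_one_geom_sum,
    if_neg (Nat.not_even_iff_odd.mpr hd), Pi.zero_apply, neg_one_mul]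
  abel

end SignMatrix

section SignMatrixRank

variable (R : Type*) [CommRing R]

lemma det_submatrix_signMatrix_mul_transpositionMatrix (d : ℕ) :
    ((signMatrix R d * transpositionMatrix R d).submatrix (cycleRep d) id).det = 1 := by
  rw [mul_transpositionMatrix, det_of_isUpperTriangular]
  · simp [signMatrix, cycleRep_lt_rev_cycleRep]
  · intro i j hji
    have hji : j < i := hji
    simp [signMatrix, cycleRep_lt_rev_cycleRep, cycleRep_lt_cycleRep, hji, hji.not_gt]

lemma isUnit_one_submatrix_mul_signMatrix_mul_transpositionMatrix (d : ℕ) :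
    IsUnit ((1 : Matrix (Fin d) (Fin d) R).submatrix (cycleRep d) id *
      (signMatrix R d * transpositionMatrix R d)) := by
  rw [one_submatrix_id_right_mul, isUnit_iff_isUnit_det,
    det_submatrix_signMatrix_mul_transpositionMatrix]
  exact isUnit_one

variable [Nontrivial R]

theorem rank_signMatrix (d : ℕ) : (signMatrix R d).rank = 2 * (d / 2) := by
  have hlower : 2 * (d / 2) ≤ (signMatrix R d).rank := by
    simpa using two_mul_card_le_rank_of_isotropic (transpose_signMatrix d)
      (transpositionMatrix_isotropic d)
      (isUnit_one_submatrix_mul_signMatrix_mul_transpositionMatrix R d)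
  have hupper : (signMatrix R d).rank ≤ d := rank_le_width _
  rcases Nat.even_or_odd d with hd | hd
  · rw [Nat.two_mul_div_two_of_even hd] at hlower ⊢
    exact hupper.antisymm hlower
  · have hne : (fun j : Fin d => (-1 : R) ^ j.val) ≠ 0 := fun h => by
      simpa using congr_fun h ⟨0, hd.pos⟩
    have hlt := rank_lt_card_of_mulVec_eq_zero hne (signMatrix_mulVec_alternating hd)
    rw [Fintype.card_fin] at hlt
    have := Nat.two_mul_div_two_add_one_of_odd hd
    omega

end SignMatrixRank

theorem hyperelliptic_transposition_lagrangian_general (R : Type*) [CommRing R] [Nontrivial R]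
    (d : ℕ) :
    LinearIndependent R (fun i : Fin (d / 2) =>
      signMatrix R d *ᵥ (Pi.single (cycleRep d i) 1 + Pi.single (cycleRep d i).rev 1))
    ∧ (signMatrix R d).rank = 2 * (d / 2) := by
  refine ⟨?_, rank_signMatrix R d⟩
  simp_rw [← transpositionMatrix_col]
  exact linearIndependent_col_of_isUnit_mul
    (isUnit_one_submatrix_mul_signMatrix_mul_transpositionMatrix R d)

/-- For the matrix `A` with `A i j = sign (j - i)` (the intersection matrix
of the order-reversing permutation), the vectors `A(e_i + e_{d+1−i})`,
`i = 1,…,⌊d/2⌋`, are linearly independent, and `rank A = 2⌊d/2⌋`. -/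
theorem hyperelliptic_transposition_lagrangian (d : ℕ) (hd : 2 ≤ d) :
    let A : Matrix (Fin d) (Fin d) ℝ :=
      Matrix.of fun i j => if i < j then 1 else if j < i then -1 else 0
    LinearIndependent ℝ (fun i : Fin (d / 2) =>
      A.mulVec (Pi.single ⟨i.val, lt_of_lt_of_le i.isLt (Nat.div_le_self d 2)⟩ (1 : ℝ) +
        Pi.single ⟨d - 1 - i.val, by omega⟩ (1 : ℝ)))
    ∧ A.rank = 2 * (d / 2) := by
  -- `Fin.rev i` has value `d - (i + 1)`, not `d - 1 - i`.
  simp only [Nat.sub_sub, Nat.add_comm 1]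
  exact hyperelliptic_transposition_lagrangian_general ℝ d
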